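/- Let (J1, J2, J3) be a para-hypercomplex structure on a 4-dimensional real vector space V and let g, h be two compatible metrics. If w ∈ V satisfies h(w,w) ≠ 0, then g(w,w) ≠ 0 and g = (g(w,w)/h(w,w))·h on all of V. -/

import Mathlib

theorem form_aux {V : Type*} [AddCommGroup V] [Module ℝ V]
    (J1 J2 J3 : V →ₗ[ℝ] V)
    (e11 : ∀ x, J1 (J1 x) = -x) (e22 : ∀ x, J2 (J2 x) = x) (e33 : ∀ x, J3 (J3 x) = x)
    (e12 : ∀ x, J1 (J2 x) = J3 x)
    (g : V →ₗ[ℝ] V →ₗ[ℝ] ℝ)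
    (gsymm : ∀ x y, g x y = g y x)
    (gJ1 : ∀ x y, g (J1 x) (J1 y) = g x y)
    (gJ2 : ∀ x y, g (J2 x) (J2 y) = -g x y)
    (gJ3 : ∀ x y, g (J3 x) (J3 y) = -g x y) (w : V) (a b c d a' b' c' d' : ℝ) :
    g (a • w + b • J1 w + c • J2 w + d • J3 w) (a' • w + b' • J1 w + c' • J2 w + d' • J3 w)
      = g w w * (a * a' + b * b' - c * c' - d * d') := by
  have e13 : ∀ x, J1 (J3 x) = -J2 x := fun x => by rw [← e12, e11]
  have h1 : g w (J1 w) = 0 := by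
    have := gJ1 w (J1 w)
    rw [e11, map_neg, gsymm (J1 w) w] at this
    linarith
  have h2 : g w (J2 w) = 0 := by
    have := gJ2 w (J2 w)
    rw [e22, gsymm (J2 w) w] at this
    linarith
  have h3 : g w (J3 w) = 0 := by
    have := gJ3 w (J3 w)
    rw [e33, gsymm (J3 w) w] at this
    linarith
  have h12 : g (J1 w) (J2 w) = 0 := by
    have := gJ1 (J1 w) (J2 w)
    rw [e11, e12, map_neg, LinearMap.neg_apply] at this
    linarith
  have h13 : g (J1 w) (J3 w) = 0 := by
    have := gJ1 (J1 w) (J3 w)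
    rw [e11, e13, map_neg, map_neg, LinearMap.neg_apply] at this
    linarith
  have h23 : g (J2 w) (J3 w) = 0 := by
    have := gJ1 (J2 w) (J3 w)
    rw [e12, e13, map_neg, gsymm (J3 w) (J2 w)] at this
    linarith
  have k1 := gsymm (J1 w) w
  have k2 := gsymm (J2 w) w
  have k3 := gsymm (J3 w) w
  have k12 := gsymm (J2 w) (J1 w)
  have k13 := gsymm (J3 w) (J1 w)
  have k23 := gsymm (J3 w) (J2 w)
  simp only [map_add, map_smul, LinearMap.add_apply, LinearMap.smul_apply, smul_eq_mul,
    gJ1, gJ2, gJ3, k1, k2, k3, k12, k13, k23, h1, h2, h3, h12, h13, h23]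
  ring

theorem stmt_8 (V : Type*) [AddCommGroup V] [Module ℝ V]
    [FiniteDimensional ℝ V] (hdim : Module.finrank ℝ V = 4)
    (J1 J2 J3 : V →ₗ[ℝ] V)
    (hJ1 : J1 ∘ₗ J1 = -LinearMap.id)
    (hJ2 : J2 ∘ₗ J2 = LinearMap.id)
    (hJ3 : J3 ∘ₗ J3 = LinearMap.id)
    (h12 : J1 ∘ₗ J2 = J3)
    (h21 : J2 ∘ₗ J1 = -J3)
    (g h : V →ₗ[ℝ] V →ₗ[ℝ] ℝ)
    (gsymm : ∀ x y, g x y = g y x)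
    (gnd : ∀ x, (∀ y, g x y = 0) → x = 0)
    (gJ1 : ∀ x y, g (J1 x) (J1 y) = g x y)
    (gJ2 : ∀ x y, g (J2 x) (J2 y) = -g x y)
    (gJ3 : ∀ x y, g (J3 x) (J3 y) = -g x y)
    (hsymm : ∀ x y, h x y = h y x)
    (hnd : ∀ x, (∀ y, h x y = 0) → x = 0)
    (hJ1' : ∀ x y, h (J1 x) (J1 y) = h x y)
    (hJ2' : ∀ x y, h (J2 x) (J2 y) = -h x y)
    (hJ3' : ∀ x y, h (J3 x) (J3 y) = -h x y)
    (w : V) (hw : h w w ≠ 0) :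
    g w w ≠ 0 ∧ ∀ X Y, g X Y = (g w w / h w w) * h X Y := by
  have e11 : ∀ x, J1 (J1 x) = -x := fun x => by simpa using LinearMap.congr_fun hJ1 x
  have e22 : ∀ x, J2 (J2 x) = x := fun x => by simpa using LinearMap.congr_fun hJ2 x
  have e33 : ∀ x, J3 (J3 x) = x := fun x => by simpa using LinearMap.congr_fun hJ3 x
  have e12 : ∀ x, J1 (J2 x) = J3 x := fun x => by simpa using LinearMap.congr_fun h12 x
  have G := form_aux J1 J2 J3 e11 e22 e33 e12 g gsymm gJ1 gJ2 gJ3 w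
  have H := form_aux J1 J2 J3 e11 e22 e33 e12 h hsymm hJ1' hJ2' hJ3' w
  have li : LinearIndependent ℝ ![w, J1 w, J2 w, J3 w] := by
    rw [Fintype.linearIndependent_iff]
    intro c hc
    simp only [Fin.sum_univ_four, Matrix.cons_val] at hc
    have K := H (c 0) (c 1) (c 2) (c 3)
    rw [hc] at K
    simp only [map_zero, LinearMap.zero_apply] at K
    have K' : ∀ a b d e : ℝ, c 0 * a + c 1 * b - c 2 * d - c 3 * e = 0 := fun a b d e =>
      (mul_eq_zero.mp (K a b d e).symm).resolve_left hw
    have c0 := K' 1 0 0 0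
    have c1 := K' 0 1 0 0
    have c2 := K' 0 0 1 0
    have c3 := K' 0 0 0 1
    intro i
    fin_cases i <;> simp <;> linarith
  have sp : ∀ X : V, ∃ a b c d : ℝ, X = a • w + b • J1 w + c • J2 w + d • J3 w := by
    intro X
    have top := li.span_eq_top_of_card_eq_finrank' (by simp [hdim])
    have hX : X ∈ Submodule.span ℝ (Set.range ![w, J1 w, J2 w, J3 w]) := top ▸ Submodule.mem_top
    obtain ⟨c, hc⟩ := (Submodule.mem_span_range_iff_exists_fun ℝ).mp hX
    simp only [Fin.sum_univ_four, Matrix.cons_val] at hc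
    exact ⟨_, _, _, _, hc.symm⟩
  refine ⟨fun hg => ?_, fun X Y => ?_⟩
  · have : w = 0 := gnd w fun y => by
      obtain ⟨a, b, c, d, rfl⟩ := sp y
      have := G 1 0 0 0 a b c d
      rw [hg, zero_mul] at this
      simpa only [one_smul, zero_smul, add_zero] using this
    apply hw
    rw [this, map_zero]
  · obtain ⟨a, b, c, d, rfl⟩ := sp X
    obtain ⟨a', b', c', d', rfl⟩ := sp Y
    rw [G, H]
    field_simp
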